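/- Vertex-model computation of the Jones polynomial of the figure-eight knot 4₁ (the closure of the three-strand braid b₁b₂⁻¹b₁b₂⁻¹): with G₁ = R ⊗ I₂ and G₂ = I₂ ⊗ R (8×8 matrices over K, G₂ invertible) and H = h ⊗ h ⊗ h, one has ((1+q)²/q)·Tr(H·G₁·G₂⁻¹·G₁·G₂⁻¹) = q⁻² − q⁻¹ + 1 − q + q². -/

import Mathlib

open Matrix Kronecker

set_option synthInstance.maxHeartbeats 1000000
set_option maxHeartbeats 1000000

noncomputable section

/-- The ground field `K = ℚ(t)` of rational functions in one variable over `ℚ`. -/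
abbrev K : Type := RatFunc ℚ

/-- The variable `t`, a square root of `q`. -/
def t : K := RatFunc.X

/-- `q = t²`. -/
def q : K := t ^ 2

/-- Kronecker product of square matrices, flattened with the lexicographic
(row-major) index ordering: the pair `(i, j)` corresponds to position `i * n + j`. -/
def kron {m n : ℕ} (A : Matrix (Fin m) (Fin m) K) (B : Matrix (Fin n) (Fin n) K) :
    Matrix (Fin (m * n)) (Fin (m * n)) K :=
  Matrix.reindex finProdFinEquiv finProdFinEquiv (A ⊗ₖ B)

/-- The braided R-matrix of the two-state (six-vertex) model, with rows and columns
indexed by pairs `(i,j) ∈ {1,2}²` in the order `(1,1),(1,2),(2,1),(2,2)`;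
here `-t` represents `-q^{1/2}`. -/
def R : Matrix (Fin 4) (Fin 4) K :=
  !![1,  0,  0,     0;
     0,  0,  -t,    0;
     0, -t,  1 - q, 0;
     0,  0,  0,     1]

/-- The weight matrix `h = (1/(1+q))·diag(1, q)`. -/
def h : Matrix (Fin 2) (Fin 2) K := (1 + q)⁻¹ • !![1, 0; 0, q]

/-- `G₁ = R ⊗ I₂`. -/
def G₁ : Matrix (Fin 8) (Fin 8) K := kron R (1 : Matrix (Fin 2) (Fin 2) K)

/-- `G₂ = I₂ ⊗ R`. -/
def G₂ : Matrix (Fin 8) (Fin 8) K := kron (1 : Matrix (Fin 2) (Fin 2) K) R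

/-- `H = h ⊗ h ⊗ h`. -/
def H : Matrix (Fin 8) (Fin 8) K := kron (kron h h) h

theorem t_ne_zero : t ≠ 0 := RatFunc.X_ne_zero

theorem one_add_q_ne_zero : 1 + q ≠ 0 := by
  have hp : (1 + Polynomial.X ^ 2 : Polynomial ℚ) ≠ 0 := fun hp => by
    simpa using congrArg (Polynomial.eval 0) hp
  have hm := (map_ne_zero_iff _ (RatFunc.algebraMap_injective ℚ)).mpr hp
  simpa [q, t, RatFunc.algebraMap_X] using hm

theorem kron_mul_kron {m n : ℕ} (A C : Matrix (Fin m) (Fin m) K)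
    (B D : Matrix (Fin n) (Fin n) K) :
    kron A B * kron C D = kron (A * C) (B * D) := by
  simp only [kron, Matrix.reindex_apply, Matrix.submatrix_mul_equiv, Matrix.mul_kronecker_mul]

theorem kron_one_one {m n : ℕ} :
    kron (1 : Matrix (Fin m) (Fin m) K) (1 : Matrix (Fin n) (Fin n) K) = 1 := by
  simp [kron]

/-- The inverse of the braided R-matrix. -/
def Rinv : Matrix (Fin 4) (Fin 4) K :=
  !![1, 0, 0, 0;
     0, 1 - q⁻¹, -t⁻¹, 0;
     0, -t⁻¹, 0, 0;
     0, 0, 0, 1]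

theorem R_mul_Rinv : R * Rinv = 1 := by
  have ht := t_ne_zero
  ext i j
  fin_cases i <;> fin_cases j <;>
    simp [R, Rinv, q, Matrix.mul_apply, Fin.sum_univ_four]
  all_goals field_simp
  ring

theorem G₂_mul_kron_one_Rinv : G₂ * kron (1 : Matrix (Fin 2) (Fin 2) K) Rinv = 1 := by
  rw [G₂, kron_mul_kron, R_mul_Rinv, one_mul, kron_one_one]

theorem kron_apply {m n : ℕ} (A : Matrix (Fin m) (Fin m) K) (B : Matrix (Fin n) (Fin n) K)
    (i j : Fin (m * n)) :
    kron A B i j = A i.divNat j.divNat * B i.modNat j.modNat := rfl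

theorem H_eq_diagonal :
    H = Matrix.diagonal
      (fun i => ((1 + q)⁻¹) ^ 3 * ![1, q, q, q ^ 2, q, q ^ 2, q ^ 2, q ^ 3] i) := by
  have hh : h = Matrix.diagonal ![(1 + q)⁻¹, (1 + q)⁻¹ * q] := by
    ext i j
    fin_cases i <;> fin_cases j <;> simp [h]
  ext i j
  rcases eq_or_ne i j with rfl | hij
  · rw [Matrix.diagonal_apply_eq, H, kron_apply, kron_apply, hh]
    simp only [Matrix.diagonal_apply_eq]
    generalize (1 + q)⁻¹ = c
    fin_cases i <;> simp [Fin.divNat, Fin.modNat] <;> ring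
  · rw [Matrix.diagonal_apply_ne _ hij, H, kron_apply, kron_apply, hh]
    revert hij
    fin_cases i <;> fin_cases j <;> simp [Fin.divNat, Fin.modNat]

theorem G₁_mul_kron_one_Rinv :
    G₁ * kron (1 : Matrix (Fin 2) (Fin 2) K) Rinv =
      !![1, 0, 0, 0, 0, 0, 0, 0;
         0, 1 - q⁻¹, -t⁻¹, 0, 0, 0, 0, 0;
         0, 0, 0, 0, -t, 0, 0, 0;
         0, 0, 0, 0, 0, -t * (1 - q⁻¹), 1, 0;
         0, 1, 0, 0, 1 - q, 0, 0, 0;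
         0, 0, 0, -t, 0, (1 - q) * (1 - q⁻¹), (1 - q) * -t⁻¹, 0;
         0, 0, 0, 0, 0, -t⁻¹, 0, 0;
         0, 0, 0, 0, 0, 0, 0, 1] := by
  have ht := t_ne_zero
  ext i j
  rw [Matrix.mul_apply, Fin.sum_univ_eight]
  simp only [G₁, kron_apply, R, Rinv]
  fin_cases i <;> fin_cases j <;>
    simp [Fin.divNat, Fin.modNat, ht, Matrix.one_apply]

/-- vertex-model computation of the Jones polynomial of the
figure-eight knot `4₁` (the closure of the three-strand braid `b₁b₂⁻¹b₁b₂⁻¹`):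
`G₂` is invertible and
`((1+q)²/q)·Tr(H·G₁·G₂⁻¹·G₁·G₂⁻¹) = q⁻² − q⁻¹ + 1 − q + q²`. -/
theorem figure_eight_jones_six_vertex :
    IsUnit G₂ ∧
    ((1 + q) ^ 2 / q) * Matrix.trace (H * G₁ * G₂⁻¹ * G₁ * G₂⁻¹) =
      q ^ (-2 : ℤ) - q⁻¹ + 1 - q + q ^ 2 := by
  have hinv : G₂⁻¹ = kron (1 : Matrix (Fin 2) (Fin 2) K) Rinv :=
    Matrix.inv_eq_right_inv G₂_mul_kron_one_Rinv
  refine ⟨IsUnit.of_mul_eq_one _ G₂_mul_kron_one_Rinv, ?_⟩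
  have ht := t_ne_zero
  have hq := one_add_q_ne_zero
  rw [hinv, Matrix.mul_assoc _ G₁, Matrix.mul_assoc H G₁, Matrix.mul_assoc H,
    G₁_mul_kron_one_Rinv, H_eq_diagonal]
  simp only [Matrix.trace, Matrix.diag_apply, Matrix.mul_apply,
    Fin.sum_univ_eight]
  simp
  simp only [q] at hq ⊢
  field_simp
  ring
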